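/- For every nonnegative integer n, cp^e_{1,1,2}(n) − cp^o_{1,1,2}(n) equals the number of partitions π of n such that every part size of π other than the largest even part of π occurs an even number of times in π, and, if π has an even part, the largest even part of π occurs an odd number of times in π. -/

import Mathlib

/-- `(γ, ρ, σ)` is an `(a,b,m)`-copartition. -/
def IsCopartition (a b m : ℕ) (γ ρ σ : Multiset ℕ) : Prop :=
  (∀ x ∈ γ, a ≤ x ∧ x % m = a % m) ∧
  (∀ x ∈ σ, b ≤ x ∧ x % m = b % m) ∧
  ρ = Multiset.replicate (Multiset.card σ) (m * Multiset.card γ)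

/-- The set of `(a,b,m)`-copartitions of size `n`. -/
def cpSet (a b m n : ℕ) : Set (Multiset ℕ × Multiset ℕ × Multiset ℕ) :=
  {t | IsCopartition a b m t.1 t.2.1 t.2.2 ∧ t.1.sum + t.2.1.sum + t.2.2.sum = n}

/-- `cp^o_{a,b,m}(n)`. -/
noncomputable def cpOdd (a b m n : ℕ) : ℕ :=
  {t ∈ cpSet a b m n | Odd (Multiset.card t.1)}.ncard

/-- `cp^e_{a,b,m}(n)`. -/
noncomputable def cpEven (a b m n : ℕ) : ℕ :=
  {t ∈ cpSet a b m n | Even (Multiset.card t.1)}.ncard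

/-- The largest even part of a partition (0 if there is no even part). -/
def largestEvenPart (lam : Multiset ℕ) : ℕ := (lam.filter (fun x => x % 2 = 0)).sup

/-!
Let `z` mark the parts of `γ` and `w` the parts of `σ`. Deciding whether the smallest admissible
part `a` occurs in `γ`, and then whether `b` occurs in `σ`, yields functional equations whose
iteration gives `(z w q^(a+b); q^m)_∞ / ((z q^a; q^m)_∞ (w q^b; q^m)_∞)` as the generating function
of the `(a, b, m)`-copartitions. For `z = -1`, `w = 1`, `a = b = 1`, `m = 2` this is
`(-q^2; q^2)_∞ / (q^2; q^4)_∞`, which is `1 / (q^2; q^4)_∞ ^ 2` by Euler's theorem.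

On the other side, removing one copy of the largest even part `2l` leaves a partition of the form
`ν + ν`, where the even parts of `ν` are at most `2l`. Iterating two similar functional equations,
one for the smallest odd part of `ν` and one for the bound `2l`, shows that these pairs `(l, ν)`
have the generating function `1 / (q^2; q^4)_∞ ^ 2` too.
-/

open Filter PowerSeries Topology
open scoped PowerSeries.WithPiTopology

/-! ### Telescoping products -/

theorem tprod_mul_eq_tprod_mul_of_tendsto {M : Type*} [CommMonoid M] [TopologicalSpace M]
    [ContinuousMul M] [T2Space M] {u v F : ℕ → M} {l : M} (hu : Multipliable u)
    (hv : Multipliable v) (hF : Tendsto F atTop (𝓝 l)) (h : ∀ k, u k * F k = v k * F (k + 1)) :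
    (∏' k, u k) * F 0 = (∏' k, v k) * l := by
  have telescope (N : ℕ) :
      (∏ k ∈ Finset.range N, u k) * F 0 = (∏ k ∈ Finset.range N, v k) * F N := by
    induction N with
    | zero => simp
    | succ N ih =>
      calc (∏ k ∈ Finset.range (N + 1), u k) * F 0
          = (∏ k ∈ Finset.range N, u k) * F 0 * u N := by
            rw [Finset.prod_range_succ, mul_right_comm]
        _ = (∏ k ∈ Finset.range N, v k) * (u N * F N) := by rw [ih, mul_assoc, mul_comm (F N)]
        _ = (∏ k ∈ Finset.range (N + 1), v k) * F (N + 1) := by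
            rw [h, Finset.prod_range_succ, mul_assoc]
  refine tendsto_nhds_unique (hu.hasProd.tendsto_prod_nat.mul_const (F 0)) ?_
  simpa only [telescope] using hv.hasProd.tendsto_prod_nat.mul hF

/-! ### Weighted generating functions -/

section WeightedGenFun

variable {α β R : Type*} [CommRing R]

/-- The generating function `∑ w t * X ^ size t` over `t ∈ S`. It is meaningful when every size is
attained finitely often on `S`: otherwise `finsum` may return the junk value `0`. -/
noncomputable def weightedGenFun (S : Set α) (size : α → ℕ) (w : α → R) : R⟦X⟧ :=
  PowerSeries.mk fun n ↦ ∑ᶠ t ∈ {t ∈ S | size t = n}, w t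

variable {S : Set α} {size : α → ℕ} {w : α → R}

theorem weightedGenFun_sep_not_add_sep (hS : ∀ n, {t ∈ S | size t = n}.Finite) (p : α → Prop) :
    weightedGenFun S size w =
      weightedGenFun {t ∈ S | ¬p t} size w + weightedGenFun {t ∈ S | p t} size w := by
  ext n
  simp only [weightedGenFun, coeff_mk, map_add]
  have hnot : {t ∈ {t ∈ S | ¬p t} | size t = n} = {t ∈ S | size t = n} \ {t | p t} := by
    ext t; exact and_right_comm
  have hp : {t ∈ {t ∈ S | p t} | size t = n} = {t ∈ S | size t = n} ∩ {t | p t} := by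
    ext t; exact and_right_comm
  rw [hnot, hp, add_comm, finsum_mem_inter_add_sdiff _ (hS n)]

theorem weightedGenFun_eq_of_bijOn {T : Set β} {size' : β → ℕ} {w' : β → R} {f : α → β}
    {c : R} {d : ℕ} (hT : ∀ n, {t ∈ T | size' t = n}.Finite) (hf : S.BijOn f T)
    (hsize : ∀ t ∈ S, size t = size' (f t) + d) (hw : ∀ t ∈ S, w t = c * w' (f t)) :
    weightedGenFun S size w = C c * X ^ d * weightedGenFun T size' w' := by
  ext n
  simp only [weightedGenFun, mul_assoc, coeff_C_mul, coeff_X_pow_mul', coeff_mk]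
  split_ifs with hn
  · rw [mul_finsum_mem' _ _ (hT _)]
    refine finsum_mem_eq_of_bijOn f ⟨?_, hf.injOn.mono (Set.sep_subset _ _), ?_⟩
      fun t ht ↦ hw t ht.1
    · rintro t ⟨ht, rfl⟩
      exact ⟨hf.mapsTo ht, by rw [hsize t ht, Nat.add_sub_cancel]⟩
    · rintro _ ⟨hu, hun⟩
      obtain ⟨t, ht, rfl⟩ := hf.surjOn hu
      exact ⟨t, ⟨ht, by rw [hsize t ht, hun, Nat.sub_add_cancel hn]⟩, rfl⟩
  · rw [mul_zero]
    refine finsum_mem_eq_zero_of_forall_eq_zero fun t ht ↦ absurd ?_ hn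
    rw [← ht.2, hsize t ht.1]
    exact Nat.le_add_left _ _

theorem coeff_weightedGenFun_one (hS : ∀ n, {t ∈ S | size t = n}.Finite) (n : ℕ) :
    coeff n (weightedGenFun S size fun _ ↦ (1 : R)) = {t ∈ S | size t = n}.ncard := by
  rw [weightedGenFun, coeff_mk, ← finsum_one, Nat.cast_finsum_mem (hS n), Nat.cast_one]

theorem coeff_weightedGenFun_eq_coeff_one {n : ℕ} {e : α} (he : e ∈ S) (hsize : size e = 0)
    (hw : w e = 1) (hlarge : ∀ t ∈ S, t ≠ e → n < size t) :
    coeff n (weightedGenFun S size w) = coeff n 1 := by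
  have eq_e {t : α} (ht : t ∈ {t ∈ S | size t = n}) : t = e :=
    by_contra fun hne ↦ (hlarge t ht.1 hne).ne' ht.2
  rw [weightedGenFun, coeff_mk, coeff_one]
  split_ifs with hn
  · have hfiber : {t ∈ S | size t = n} = {e} :=
      Set.Subset.antisymm (fun t ht ↦ eq_e ht)
        (Set.singleton_subset_iff.mpr ⟨he, hsize.trans hn.symm⟩)
    rw [hfiber, finsum_mem_singleton, hw]
  · refine finsum_mem_eq_zero_of_forall_eq_zero fun t ht ↦ absurd ?_ hn
    rw [← ht.2, eq_e ht, hsize]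

theorem tendsto_weightedGenFun_one [TopologicalSpace R] {S : ℕ → Set α} {size : ℕ → α → ℕ} (e : α)
    (he : ∀ k, e ∈ S k) (hsize : ∀ k, size k e = 0) (hw : w e = 1)
    (hlarge : ∀ k, ∀ t ∈ S k, t ≠ e → k ≤ size k t) :
    Tendsto (fun k ↦ weightedGenFun (S k) (size k) w) atTop (𝓝 1) := by
  rw [WithPiTopology.tendsto_iff_coeff_tendsto]
  refine fun n ↦ tendsto_const_nhds.congr' ?_
  filter_upwards [eventually_gt_atTop n] with k hk
  exact (coeff_weightedGenFun_eq_coeff_one (he k) (hsize k) hw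
    fun t ht hne ↦ hk.trans_le (hlarge k t ht hne)).symm

end WeightedGenFun

/-! ### q-Pochhammer symbols -/

section QPochhammer

variable {R : Type*} [CommRing R] [TopologicalSpace R]

/-- The infinite `q`-Pochhammer symbol `(z q ^ a; q ^ m)_∞` as a power series in `q = X`. -/
noncomputable def qPochhammer (z : R) (a m : ℕ) : R⟦X⟧ :=
  ∏' i : ℕ, (1 - C z * X ^ (a + m * i))

theorem multipliable_one_sub_C_mul_X_pow (z : R) (a : ℕ) {m : ℕ} (hm : 0 < m) :
    Multipliable fun i : ℕ ↦ (1 - C z * X ^ (a + m * i) : R⟦X⟧) := by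
  simp_rw [sub_eq_add_neg]
  refine WithPiTopology.multipliable_one_add_of_tendsto_order_atTop_nhds_top R ?_
  refine ENat.tendsto_nhds_top_iff_natCast_lt.mpr fun n ↦
    eventually_atTop.mpr ⟨n + 1, fun i hi ↦ ?_⟩
  have hexp : n + 1 ≤ a + m * i :=
    hi.trans <| (Nat.le_mul_of_pos_left i hm).trans (Nat.le_add_left _ _)
  rw [order_neg]
  refine (Nat.cast_lt.mpr hexp).trans_le (le_order _ _ fun j hj ↦ ?_)
  rw [coeff_C_mul, coeff_X_pow, if_neg (by exact_mod_cast hj.ne), mul_zero]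

variable [T2Space R]

theorem isUnit_qPochhammer (z : R) {a m : ℕ} (ha : 0 < a) (hm : 0 < m) :
    IsUnit (qPochhammer z a m) := by
  have hconst : constantCoeff (qPochhammer z a m) = 1 := by
    rw [qPochhammer, (multipliable_one_sub_C_mul_X_pow z a hm).map_tprod constantCoeff
      (WithPiTopology.continuous_constantCoeff R)]
    simp [ha.ne']
  rw [isUnit_iff_constantCoeff, hconst]
  exact isUnit_one

variable [IsTopologicalRing R]

theorem qPochhammer_two_mul_mul (z : R) (a : ℕ) {m : ℕ} (hm : 0 < m) :
    qPochhammer z a (2 * m) * qPochhammer z (a + m) (2 * m) = qPochhammer z a m := by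
  have he (i : ℕ) : a + 2 * m * i = a + m * (2 * i) := by ring
  have ho (i : ℕ) : a + m + 2 * m * i = a + m * (2 * i + 1) := by ring
  have heven := multipliable_one_sub_C_mul_X_pow z a (Nat.mul_pos two_pos hm)
  have hodd := multipliable_one_sub_C_mul_X_pow z (a + m) (Nat.mul_pos two_pos hm)
  simp only [he] at heven
  simp only [ho] at hodd
  simp only [qPochhammer, he, ho]
  exact tprod_even_mul_odd (f := fun i ↦ (1 - C z * X ^ (a + m * i) : R⟦X⟧)) heven hodd

theorem qPochhammer_neg_mul (z : R) (a : ℕ) {m : ℕ} (hm : 0 < m) :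
    qPochhammer (-z) a m * qPochhammer z a m = qPochhammer (z ^ 2) (2 * a) (2 * m) := by
  simp only [qPochhammer]
  rw [← (multipliable_one_sub_C_mul_X_pow (-z) a hm).tprod_mul
    (multipliable_one_sub_C_mul_X_pow z a hm)]
  refine tprod_congr fun i ↦ ?_
  rw [map_neg, map_pow, mul_assoc 2, ← mul_add, pow_mul']
  ring

/-- Euler's theorem on partitions into distinct and into odd parts. -/
theorem qPochhammer_neg_one_mul_qPochhammer_one {m : ℕ} (hm : 0 < m) :
    qPochhammer (-1 : R) m m * qPochhammer (1 : R) m (2 * m) = 1 := by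
  have hunit : IsUnit (qPochhammer (1 : R) (2 * m) (2 * m)) :=
    isUnit_qPochhammer 1 (Nat.mul_pos two_pos hm) (Nat.mul_pos two_pos hm)
  have hsplit : qPochhammer (1 : R) m (2 * m) * qPochhammer 1 (2 * m) (2 * m) =
      qPochhammer 1 m m := by
    simpa only [two_mul m] using qPochhammer_two_mul_mul (1 : R) m hm
  rw [← hunit.mul_left_inj, mul_assoc, hsplit, qPochhammer_neg_mul _ _ hm, one_pow, one_mul]

end QPochhammer

/-! ### Copartitions -/

section Copartition

/-- The possible partitions `γ` in an `(a, b, m)`-copartition `(γ, ρ, σ)`. -/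
def partsFrom (a m : ℕ) : Set (Multiset ℕ) :=
  {s | ∀ x ∈ s, a ≤ x ∧ x % m = a % m}

/-- Copartitions encoded by their pair `(γ, σ)`, which determines `ρ`. -/
def copartitionPairs (a b m : ℕ) : Set (Multiset ℕ × Multiset ℕ) :=
  partsFrom a m ×ˢ partsFrom b m

/-- The size `|γ| + |ρ| + |σ|` of the copartition with pair `(γ, σ)`. -/
def copartitionSize (m : ℕ) (t : Multiset ℕ × Multiset ℕ) : ℕ :=
  t.1.sum + t.2.sum + m * (t.1.card * t.2.card)

/-- The copartition `(γ, ρ, σ)` with pair `(γ, σ)`. -/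
def copartitionOfPair (m : ℕ) (t : Multiset ℕ × Multiset ℕ) :
    Multiset ℕ × Multiset ℕ × Multiset ℕ :=
  (t.1, Multiset.replicate t.2.card (m * t.1.card), t.2)

theorem copartitionOfPair_injective (m : ℕ) : Function.Injective (copartitionOfPair m) :=
  fun t u h ↦ show (t.1, t.2) = (u.1, u.2) from
    Prod.ext (congrArg (fun v ↦ v.1) h) (congrArg (fun v ↦ v.2.2) h)

theorem cpSet_eq_image (a b m n : ℕ) :
    cpSet a b m n =
      copartitionOfPair m '' {t ∈ copartitionPairs a b m | copartitionSize m t = n} := by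
  have hsize (t : Multiset ℕ × Multiset ℕ) : t.1.sum +
      (Multiset.replicate t.2.card (m * t.1.card)).sum + t.2.sum = copartitionSize m t := by
    rw [Multiset.sum_replicate, copartitionSize, smul_eq_mul]
    ring
  ext t
  constructor
  · obtain ⟨γ, ρ, σ⟩ := t
    rintro ⟨⟨hγ, hσ, hρ⟩, hn⟩
    obtain rfl : ρ = Multiset.replicate σ.card (m * γ.card) := hρ
    exact ⟨(γ, σ), ⟨⟨hγ, hσ⟩, (hsize (γ, σ)).symm.trans hn⟩, rfl⟩
  · rintro ⟨t, ⟨⟨hγ, hσ⟩, hn⟩, rfl⟩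
    exact ⟨⟨hγ, hσ, rfl⟩, (hsize t).trans hn⟩

theorem finite_setOf_pos_sum_le (n : ℕ) : {s : Multiset ℕ | (∀ x ∈ s, 0 < x) ∧ s.sum ≤ n}.Finite :=
  ((Set.finite_Iic n).biUnion fun k _ ↦ Set.finite_range (Nat.Partition.parts (n := k))).subset
    fun s hs ↦ Set.mem_biUnion (x := s.sum) hs.2 ⟨⟨s, hs.1 _, rfl⟩, rfl⟩

theorem finite_copartitionPairs {a b : ℕ} (ha : 0 < a) (hb : 0 < b) (m n : ℕ) :
    {t ∈ copartitionPairs a b m | copartitionSize m t = n}.Finite := by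
  refine ((finite_setOf_pos_sum_le n).prod (finite_setOf_pos_sum_le n)).subset ?_
  rintro ⟨γ, σ⟩ ⟨⟨hγ, hσ⟩, rfl⟩
  exact ⟨⟨fun x hx ↦ ha.trans_le (hγ x hx).1, by simp only [copartitionSize]; omega⟩,
    ⟨fun x hx ↦ hb.trans_le (hσ x hx).1, by simp only [copartitionSize]; omega⟩⟩

theorem finsum_mem_neg_one_pow {α : Type*} {S : Set α} (hS : S.Finite) (f : α → ℕ) :
    ∑ᶠ t ∈ S, (-1 : ℤ) ^ f t = {t ∈ S | Even (f t)}.ncard - {t ∈ S | Odd (f t)}.ncard := by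
  have heven : ∑ᶠ t ∈ S ∩ {t | Even (f t)}, (-1 : ℤ) ^ f t = {t ∈ S | Even (f t)}.ncard := by
    rw [finsum_mem_congr rfl fun t ht ↦ Even.neg_one_pow ht.2, ← finsum_one,
      Nat.cast_finsum_mem (hS.sep _), Nat.cast_one]
    rfl
  have hodd : ∑ᶠ t ∈ S \ {t | Even (f t)}, (-1 : ℤ) ^ f t = -{t ∈ S | Odd (f t)}.ncard := by
    have hset : S \ {t | Even (f t)} = {t ∈ S | Odd (f t)} := by
      ext t; simp
    rw [hset, finsum_mem_congr rfl fun t ht ↦ Odd.neg_one_pow ht.2,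
      finsum_mem_neg_distrib _ (hS.sep _), ← finsum_one,
      Nat.cast_finsum_mem (hS.sep _), Nat.cast_one]
  rw [← finsum_mem_inter_add_sdiff {t | Even (f t)} hS, heven, hodd, sub_eq_add_neg]

variable {R : Type*} [CommRing R]

/-- The generating function of `(a, b, m)`-copartitions, in which `z` marks the parts of `γ` and `w`
marks the parts of `σ`. -/
noncomputable def copartitionGenFun (z w : R) (a b m : ℕ) : R⟦X⟧ :=
  weightedGenFun (copartitionPairs a b m) (copartitionSize m)
    fun t ↦ z ^ t.1.card * w ^ t.2.card

theorem coeff_copartitionGenFun_neg_one_one {a b : ℕ} (ha : 0 < a) (hb : 0 < b) (m n : ℕ) :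
    coeff n (copartitionGenFun (-1 : ℤ) 1 a b m) = cpEven a b m n - cpOdd a b m n := by
  have hncard (p : ℕ → Prop) : {t ∈ cpSet a b m n | p t.1.card}.ncard =
      {t ∈ {t ∈ copartitionPairs a b m | copartitionSize m t = n} | p t.1.card}.ncard := by
    rw [cpSet_eq_image, ← Set.ncard_image_of_injective _ (copartitionOfPair_injective m)]
    congr 1
    exact (Set.image_inter_preimage (copartitionOfPair m) _ {t | p t.1.card}).symm
  simp only [copartitionGenFun, weightedGenFun, coeff_mk, one_pow, mul_one]
  rw [finsum_mem_neg_one_pow (finite_copartitionPairs ha hb m n), cpEven, cpOdd, hncard, hncard]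

theorem mem_partsFrom_add_iff {a m : ℕ} (hm : 0 < m) {s : Multiset ℕ} :
    s ∈ partsFrom (a + m) m ↔ s ∈ partsFrom a m ∧ a ∉ s := by
  simp only [partsFrom, Set.mem_ofPred_eq, Nat.add_mod_right]
  constructor
  · exact fun h ↦ ⟨fun x hx ↦ ⟨le_of_add_le_left (h x hx).1, (h x hx).2⟩,
      fun ha ↦ by have := (h a ha).1; omega⟩
  · rintro ⟨h, ha⟩ x hx
    refine ⟨?_, (h x hx).2⟩
    have hne : x ≠ a := fun hxa ↦ ha (hxa ▸ hx)
    have hlt : a < x := lt_of_le_of_ne (h x hx).1 hne.symm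
    exact Nat.ModEq.add_le_of_lt (h x hx).2.symm hlt

theorem map_add_mem_partsFrom {b m : ℕ} {s : Multiset ℕ} (hs : s ∈ partsFrom b m) :
    s.map (· + m) ∈ partsFrom (b + m) m := by
  simpa [partsFrom] using hs

theorem map_sub_mem_partsFrom {b m : ℕ} {s : Multiset ℕ} (hs : s ∈ partsFrom (b + m) m) :
    s.map (· - m) ∈ partsFrom b m := by
  intro y hy
  obtain ⟨x, hx, rfl⟩ := Multiset.mem_map.mp hy
  obtain ⟨hle, hmod⟩ := hs x hx
  exact ⟨Nat.le_sub_of_add_le hle,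
    by rw [← Nat.mod_eq_sub_mod (le_of_add_le_right hle), hmod, Nat.add_mod_right]⟩

theorem map_sub_map_add {m : ℕ} {s : Multiset ℕ} (hs : ∀ x ∈ s, m ≤ x) :
    (s.map (· - m)).map (· + m) = s := by
  rw [Multiset.map_map]
  exact (Multiset.map_congr rfl fun x hx ↦ Nat.sub_add_cancel (hs x hx)).trans s.map_id'

/-- Deleting one part `a` of `γ` shortens every part of `ρ` by `m`; adding `m` to every part of `σ`
makes up for this. -/
theorem bijOn_erase_map_add (a b m : ℕ) :
    Set.BijOn (fun t ↦ (t.1.erase a, t.2.map (· + m))) {t ∈ copartitionPairs a b m | a ∈ t.1}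
      (copartitionPairs a (b + m) m) := by
  refine Set.InvOn.bijOn (f' := fun t ↦ (a ::ₘ t.1, t.2.map (· - m))) ⟨?_, ?_⟩ ?_ ?_
  · rintro ⟨γ, σ⟩ ⟨-, ha⟩
    simp [Multiset.cons_erase ha]
  · rintro ⟨γ, σ⟩ ⟨-, hσ⟩
    simp [map_sub_map_add fun x hx ↦ le_of_add_le_right (hσ x hx).1]
  · rintro ⟨γ, σ⟩ ⟨⟨hγ, hσ⟩, -⟩
    exact ⟨fun x hx ↦ hγ x (Multiset.mem_of_mem_erase hx), map_add_mem_partsFrom hσ⟩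
  · rintro ⟨γ, σ⟩ ⟨hγ, hσ⟩
    exact ⟨⟨Multiset.forall_mem_cons.mpr ⟨⟨le_rfl, rfl⟩, hγ⟩, map_sub_mem_partsFrom hσ⟩,
      Multiset.mem_cons_self a γ⟩

variable {a b m : ℕ}

theorem copartitionGenFun_eq_add (z w : R) (ha : 0 < a) (hb : 0 < b) (hm : 0 < m) :
    copartitionGenFun z w a b m =
      copartitionGenFun z w (a + m) b m + C z * X ^ a * copartitionGenFun z w a (b + m) m := by
  have hnot : {t ∈ copartitionPairs a b m | a ∉ t.1} = copartitionPairs (a + m) b m := by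
    ext t
    simp [copartitionPairs, mem_partsFrom_add_iff hm, and_right_comm]
  rw [copartitionGenFun, weightedGenFun_sep_not_add_sep (finite_copartitionPairs ha hb m)
    (fun t ↦ a ∈ t.1), hnot]
  congr 1
  refine weightedGenFun_eq_of_bijOn (finite_copartitionPairs ha (by omega) m)
    (bijOn_erase_map_add a b m) ?_ ?_ <;>
    rintro ⟨γ, σ⟩ ⟨-, haγ⟩ <;> obtain ⟨γ, rfl⟩ := Multiset.exists_cons_of_mem haγ
  · simp only [copartitionSize, Multiset.sum_cons, Multiset.card_cons, Multiset.erase_cons_head,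
      Multiset.sum_map_add, Multiset.map_id', Multiset.map_const', Multiset.sum_replicate,
      smul_eq_mul, Multiset.card_map]
    ring
  · simp only [Multiset.card_cons, Multiset.erase_cons_head, Multiset.card_map]
    ring

theorem copartitionGenFun_swap (z w : R) (ha : 0 < a) (hb : 0 < b) :
    copartitionGenFun z w a b m = copartitionGenFun w z b a m := by
  have hswap : Set.BijOn Prod.swap (copartitionPairs a b m) (copartitionPairs b a m) :=
    Set.InvOn.bijOn (f' := Prod.swap) ⟨fun t _ ↦ t.swap_swap, fun t _ ↦ t.swap_swap⟩
      (fun _ ht ↦ ht.symm) fun _ ht ↦ ht.symm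
  rw [copartitionGenFun, weightedGenFun_eq_of_bijOn (c := 1) (d := 0)
    (finite_copartitionPairs hb ha m) hswap (w' := fun t ↦ w ^ t.1.card * z ^ t.2.card)
    (fun t _ ↦ ?_) fun t _ ↦ ?_, map_one, pow_zero, one_mul, one_mul, copartitionGenFun]
  · simp only [copartitionSize, Prod.fst_swap, Prod.snd_swap]
    ring
  · simp only [Prod.fst_swap, Prod.snd_swap]
    ring

theorem one_sub_mul_copartitionGenFun (z w : R) (ha : 0 < a) (hb : 0 < b) (hm : 0 < m) :
    (1 - C z * X ^ a) * copartitionGenFun z w a b m =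
      (1 - C (z * w) * X ^ (a + b)) * copartitionGenFun z w (a + m) b m := by
  have hγ := copartitionGenFun_eq_add z w ha hb hm
  have hσ := copartitionGenFun_eq_add w z hb ha hm
  rw [copartitionGenFun_swap w z hb ha, copartitionGenFun_swap w z (Nat.add_pos_left hb m) ha,
    copartitionGenFun_swap w z hb (Nat.add_pos_left ha m)] at hσ
  rw [map_mul, pow_add]
  linear_combination hγ - C z * X ^ a * hσ

theorem one_sub_mul_one_sub_mul_copartitionGenFun (z w : R) (ha : 0 < a) (hb : 0 < b)
    (hm : 0 < m) :
    (1 - C z * X ^ a) * (1 - C w * X ^ b) * copartitionGenFun z w a b m =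
      (1 - C (z * w) * X ^ (a + b)) * (1 - C (z * w) * X ^ (a + b + m)) *
        copartitionGenFun z w (a + m) (b + m) m := by
  have hγ := one_sub_mul_copartitionGenFun z w ha hb hm
  have hσ := one_sub_mul_copartitionGenFun w z hb (Nat.add_pos_left ha m) hm
  rw [copartitionGenFun_swap w z hb (by omega), copartitionGenFun_swap w z (by omega) (by omega),
    mul_comm w z, show b + (a + m) = a + b + m by ring] at hσ
  linear_combination (1 - C w * X ^ b) * hγ + (1 - C (z * w) * X ^ (a + b)) * hσ

theorem le_sum_of_mem_partsFrom {s : Multiset ℕ} (hs : s ∈ partsFrom a m) (h0 : s ≠ 0) :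
    a ≤ s.sum := by
  obtain ⟨x, hx⟩ := Multiset.exists_mem_of_ne_zero h0
  exact (hs x hx).1.trans (Multiset.le_sum_of_mem hx)

theorem min_le_copartitionSize {t : Multiset ℕ × Multiset ℕ} (ht : t ∈ copartitionPairs a b m)
    (h0 : t ≠ 0) : min a b ≤ copartitionSize m t := by
  simp only [copartitionSize]
  by_cases hγ : t.1 = 0
  · have hσ : t.2 ≠ 0 := fun hσ ↦ h0 (Prod.ext hγ hσ)
    have := le_sum_of_mem_partsFrom ht.2 hσ
    omega
  · have := le_sum_of_mem_partsFrom ht.1 hγ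
    omega

variable [TopologicalSpace R]

theorem tendsto_copartitionGenFun_one (z w : R) (a b : ℕ) (hm : 0 < m) :
    Tendsto (fun k ↦ copartitionGenFun z w (a + m * k) (b + m * k) m) atTop (𝓝 1) := by
  refine tendsto_weightedGenFun_one 0 (fun _ ↦ by simp [copartitionPairs, partsFrom])
    (fun _ ↦ by simp [copartitionSize]) (by simp) fun k t ht h0 ↦ ?_
  refine le_trans ?_ (min_le_copartitionSize ht h0)
  have := Nat.le_mul_of_pos_left k hm
  omega

variable [IsTopologicalRing R] [T2Space R]

theorem qPochhammer_mul_copartitionGenFun (z w : R) (ha : 0 < a) (hb : 0 < b) (hm : 0 < m) :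
    qPochhammer z a m * qPochhammer w b m * copartitionGenFun z w a b m =
      qPochhammer (z * w) (a + b) m := by
  have hz := multipliable_one_sub_C_mul_X_pow z a hm
  have hw := multipliable_one_sub_C_mul_X_pow w b hm
  have heven := multipliable_one_sub_C_mul_X_pow (z * w) (a + b) (Nat.mul_pos two_pos hm)
  have hodd := multipliable_one_sub_C_mul_X_pow (z * w) (a + b + m) (Nat.mul_pos two_pos hm)
  have htelescope := tprod_mul_eq_tprod_mul_of_tendsto (hz.mul hw) (heven.mul hodd)
    (tendsto_copartitionGenFun_one z w a b hm) fun k ↦ by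
      rw [one_sub_mul_one_sub_mul_copartitionGenFun z w (Nat.add_pos_left ha (m * k))
        (Nat.add_pos_left hb (m * k)) hm]
      ring_nf
  rw [hz.tprod_mul hw, heven.tprod_mul hodd, mul_one] at htelescope
  simpa only [qPochhammer, mul_zero, add_zero] using
    htelescope.trans (qPochhammer_two_mul_mul (z * w) (a + b) hm)

end Copartition

/-! ### The largest even part -/

section LargestEvenPart

theorem sup_mem_of_ne_zero {α : Type*} [LinearOrder α] [OrderBot α] {s : Multiset α} (hs : s ≠ 0) :
    s.sup ∈ s := by
  classical
  obtain ⟨x, hx, hsup⟩ := s.toFinset.exists_mem_eq_sup (Multiset.toFinset_nonempty.mpr hs) id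
  rw [Finset.sup_def, Multiset.map_id, Multiset.toFinset_val, Multiset.sup_dedup, id] at hsup
  exact hsup ▸ Multiset.mem_toFinset.mp hx

variable {lam : Multiset ℕ}

theorem largestEvenPart_le_iff {b : ℕ} :
    largestEvenPart lam ≤ b ↔ ∀ x ∈ lam, Even x → x ≤ b := by
  simp [largestEvenPart, Nat.even_iff]

theorem largestEvenPart_eq_zero_or_mem_and_even :
    largestEvenPart lam = 0 ∨ largestEvenPart lam ∈ lam ∧ Even (largestEvenPart lam) := by
  rw [Nat.even_iff]
  obtain h | h := eq_or_ne (lam.filter fun x ↦ x % 2 = 0) 0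
  · exact .inl (by rw [largestEvenPart, h, Multiset.sup_zero, Nat.bot_eq_zero])
  · exact .inr (Multiset.mem_filter.mp (sup_mem_of_ne_zero h))

theorem even_largestEvenPart : Even (largestEvenPart lam) := by
  obtain h | ⟨-, h⟩ := largestEvenPart_eq_zero_or_mem_and_even (lam := lam)
  · rw [h]; exact Even.zero
  · exact h

theorem largestEvenPart_mem (h : ∃ x ∈ lam, Even x) : largestEvenPart lam ∈ lam := by
  obtain ⟨x, hx, hxe⟩ := h
  obtain h0 | ⟨h, -⟩ := largestEvenPart_eq_zero_or_mem_and_even (lam := lam)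
  · have hx0 : x = 0 := Nat.le_zero.mp (largestEvenPart_le_iff.mp h0.le x hx hxe)
    rwa [h0, ← hx0]
  · exact h

theorem largestEvenPart_cons {x : ℕ} (hx : Even x) :
    largestEvenPart (x ::ₘ lam) = max x (largestEvenPart lam) := by
  rw [largestEvenPart, Multiset.filter_cons_of_pos (p := fun x ↦ x % 2 = 0) _
    (Nat.even_iff.mp hx), Multiset.sup_cons, largestEvenPart]

theorem exists_erase_largestEvenPart_eq_two_nsmul_iff :
    (∃ ν, lam.erase (largestEvenPart lam) = 2 • ν) ↔
      (∀ x ∈ lam, x ≠ largestEvenPart lam → Even (lam.count x)) ∧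
        ((∃ x ∈ lam, Even x) → Odd (lam.count (largestEvenPart lam))) := by
  constructor
  · rintro ⟨ν, hν⟩
    have heven (x : ℕ) : Even ((lam.erase (largestEvenPart lam)).count x) := by
      rw [hν, Multiset.count_nsmul]
      exact even_two_mul _
    refine ⟨fun x _ hne ↦ Multiset.count_erase_of_ne hne lam ▸ heven x, fun h ↦ ?_⟩
    have hpos := Multiset.count_pos.mpr (largestEvenPart_mem h)
    have hpred := heven (largestEvenPart lam)
    rw [Multiset.count_erase_self] at hpred
    grind
  · rintro ⟨hne, hodd⟩
    refine Multiset.exists_smul_of_dvd_count _ fun x hx ↦ even_iff_two_dvd.mp ?_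
    have hmem := Multiset.mem_of_mem_erase hx
    obtain rfl | hxL := eq_or_ne x (largestEvenPart lam)
    · rw [Multiset.count_erase_self]
      exact (hodd ⟨_, hmem, even_largestEvenPart⟩).tsub_odd odd_one
    · rw [Multiset.count_erase_of_ne hxL]
      exact hne x hmem hxL

end LargestEvenPart

/-! ### Partitions whose multiplicities are even except at the largest even part -/

section CappedPair

/-- Pairs `(l, ν)` of a bound `l` and a partition `ν` whose even parts are at most `2l` and whose
odd parts exceed `2j`. For `j = 0` they encode the partitions `{2l} + ν + ν`. -/
def cappedPairs (j : ℕ) : Set (ℕ × Multiset ℕ) :=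
  {p | ∀ x ∈ p.2, 0 < x ∧ (Even x → x ≤ 2 * p.1) ∧ (Odd x → 2 * j < x)}

/-- The weighted size `(2k + 1) · 2l + 2|ν|` of the pair `(l, ν)`; for `k = 0` it is the size of the
partition `{2l} + ν + ν`. -/
def cappedSize (k : ℕ) (p : ℕ × Multiset ℕ) : ℕ :=
  (2 * k + 1) * (2 * p.1) + 2 * p.2.sum

/-- The partition `{2l} + ν + ν`, or just `ν + ν` when `l = 0`. -/
def partitionOfCappedPair (p : ℕ × Multiset ℕ) : Multiset ℕ :=
  if p.1 = 0 then 2 • p.2 else 2 * p.1 ::ₘ 2 • p.2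

theorem zero_notMem_of_mem_cappedPairs {j : ℕ} {p : ℕ × Multiset ℕ} (hp : p ∈ cappedPairs j) :
    0 ∉ p.2 :=
  fun h ↦ (hp 0 h).1.false

theorem mem_cappedPairs_succ_iff {j : ℕ} {p : ℕ × Multiset ℕ} :
    p ∈ cappedPairs (j + 1) ↔ p ∈ cappedPairs j ∧ 2 * j + 1 ∉ p.2 := by
  constructor
  · intro hp
    refine ⟨fun x hx ↦ ⟨(hp x hx).1, (hp x hx).2.1, fun h ↦ ?_⟩, fun hj ↦ ?_⟩
    · have := (hp x hx).2.2 h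
      omega
    · have := (hp _ hj).2.2 (odd_two_mul_add_one j)
      omega
  · rintro ⟨hp, hj⟩ x hx
    refine ⟨(hp x hx).1, (hp x hx).2.1, fun h ↦ ?_⟩
    have hlt := (hp x hx).2.2 h
    have hne : x ≠ 2 * j + 1 := fun hxj ↦ hj (hxj ▸ hx)
    obtain ⟨i, rfl⟩ := h
    omega

theorem finite_cappedPairs (j k n : ℕ) : {p ∈ cappedPairs j | cappedSize k p = n}.Finite := by
  refine ((Set.finite_Iic n).prod (finite_setOf_pos_sum_le n)).subset ?_
  rintro ⟨l, ν⟩ ⟨hν, rfl⟩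
  have hl : 2 * l ≤ (2 * k + 1) * (2 * l) := Nat.le_mul_of_pos_left _ (Nat.succ_pos _)
  refine ⟨?_, fun x hx ↦ (hν x hx).1, ?_⟩ <;> simp only [cappedSize, Set.mem_Iic] <;> omega

theorem sum_partitionOfCappedPair (p : ℕ × Multiset ℕ) :
    (partitionOfCappedPair p).sum = cappedSize 0 p := by
  rw [partitionOfCappedPair, cappedSize]
  split_ifs with h <;> simp [h, Multiset.sum_nsmul]

theorem largestEvenPart_partitionOfCappedPair {j : ℕ} {p : ℕ × Multiset ℕ}
    (hp : p ∈ cappedPairs j) :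
    largestEvenPart (partitionOfCappedPair p) = 2 * p.1 := by
  have hle : largestEvenPart (2 • p.2) ≤ 2 * p.1 :=
    largestEvenPart_le_iff.mpr fun x hx ↦ (hp x (Multiset.mem_of_mem_nsmul hx)).2.1
  rw [partitionOfCappedPair]
  split_ifs with h
  · omega
  · rw [largestEvenPart_cons (even_two_mul _), max_eq_left hle]

theorem erase_partitionOfCappedPair {j : ℕ} {p : ℕ × Multiset ℕ} (hp : p ∈ cappedPairs j) :
    (partitionOfCappedPair p).erase (2 * p.1) = 2 • p.2 := by
  rw [partitionOfCappedPair]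
  split_ifs with h
  · rw [h]
    exact Multiset.erase_of_notMem fun h0 ↦
      zero_notMem_of_mem_cappedPairs hp (Multiset.mem_of_mem_nsmul h0)
  · exact Multiset.erase_cons_head _ _

theorem pos_of_mem_partitionOfCappedPair {j : ℕ} {p : ℕ × Multiset ℕ} (hp : p ∈ cappedPairs j)
    {x : ℕ} (hx : x ∈ partitionOfCappedPair p) : 0 < x := by
  rw [partitionOfCappedPair] at hx
  split_ifs at hx with h
  · exact (hp x (Multiset.mem_of_mem_nsmul hx)).1
  · obtain rfl | hx := Multiset.mem_cons.mp hx
    · omega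
    · exact (hp x (Multiset.mem_of_mem_nsmul hx)).1

theorem injOn_partitionOfCappedPair (j : ℕ) : (cappedPairs j).InjOn partitionOfCappedPair := by
  intro p hp p' hp' h
  have hl : 2 * p.1 = 2 * p'.1 := by
    rw [← largestEvenPart_partitionOfCappedPair hp, h, largestEvenPart_partitionOfCappedPair hp']
  have hν : 2 • p.2 = 2 • p'.2 := by
    rw [← erase_partitionOfCappedPair hp, ← erase_partitionOfCappedPair hp', h, hl]
  exact Prod.ext (Nat.mul_left_cancel two_pos hl) (nsmul_right_injective two_ne_zero hν)

theorem exists_cappedPair_of_erase_eq {lam ν : Multiset ℕ} (hpos : ∀ x ∈ lam, 0 < x)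
    (hν : lam.erase (largestEvenPart lam) = 2 • ν) :
    ∃ p ∈ cappedPairs 0, partitionOfCappedPair p = lam := by
  have hl : 2 * (largestEvenPart lam / 2) = largestEvenPart lam :=
    Nat.two_mul_div_two_of_even even_largestEvenPart
  refine ⟨(largestEvenPart lam / 2, ν), fun x hx ↦ ?_, ?_⟩
  · have hx : x ∈ lam := Multiset.mem_of_mem_erase <|
      hν ▸ (Multiset.mem_nsmul_of_ne_zero two_ne_zero).mpr hx
    exact ⟨hpos x hx, largestEvenPart_le_iff.mp hl.ge x hx, fun _ ↦ hpos x hx⟩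
  · rw [partitionOfCappedPair, hl, ← hν]
    obtain h0 | ⟨hmem, -⟩ := largestEvenPart_eq_zero_or_mem_and_even (lam := lam)
    · rw [h0, if_pos rfl, Multiset.erase_of_notMem fun h ↦ (hpos 0 h).false]
    · have := hpos _ hmem
      rw [if_neg (by dsimp only; omega), Multiset.cons_erase hmem]

theorem image_partitionOfCappedPair (n : ℕ) :
    partitionOfCappedPair '' {p ∈ cappedPairs 0 | cappedSize 0 p = n} =
      {lam | (∀ x ∈ lam, 0 < x) ∧ lam.sum = n ∧
        (∀ x ∈ lam, x ≠ largestEvenPart lam → Even (lam.count x)) ∧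
          ((∃ x ∈ lam, Even x) → Odd (lam.count (largestEvenPart lam)))} := by
  simp only [← exists_erase_largestEvenPart_eq_two_nsmul_iff]
  ext lam
  constructor
  · rintro ⟨p, ⟨hp, rfl⟩, rfl⟩
    refine ⟨fun x ↦ pos_of_mem_partitionOfCappedPair hp, sum_partitionOfCappedPair p, p.2, ?_⟩
    rw [largestEvenPart_partitionOfCappedPair hp, erase_partitionOfCappedPair hp]
  · rintro ⟨hpos, rfl, ν, hν⟩
    obtain ⟨p, hp, rfl⟩ := exists_cappedPair_of_erase_eq hpos hν
    exact ⟨p, ⟨hp, (sum_partitionOfCappedPair p).symm⟩, rfl⟩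

theorem bijOn_erase_odd (j : ℕ) :
    Set.BijOn (fun p ↦ (p.1, p.2.erase (2 * j + 1))) {p ∈ cappedPairs j | 2 * j + 1 ∈ p.2}
      (cappedPairs j) := by
  refine Set.InvOn.bijOn (f' := fun p ↦ (p.1, (2 * j + 1) ::ₘ p.2)) ⟨?_, ?_⟩ ?_ ?_
  · rintro ⟨l, ν⟩ ⟨-, hj⟩
    simp [Multiset.cons_erase hj]
  · rintro ⟨l, ν⟩ -
    simp
  · rintro ⟨l, ν⟩ ⟨hν, -⟩
    exact fun x hx ↦ hν x (Multiset.mem_of_mem_erase hx)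
  · rintro ⟨l, ν⟩ hν
    refine ⟨Multiset.forall_mem_cons.mpr ⟨⟨Nat.succ_pos _, fun h ↦ ?_, fun _ ↦ Nat.lt_succ_self _⟩,
      hν⟩, Multiset.mem_cons_self _ _⟩
    exact absurd (odd_two_mul_add_one j) (Nat.not_odd_iff_even.mpr h)

theorem bijOn_pred_fst (j : ℕ) :
    Set.BijOn (fun p ↦ (p.1 - 1, p.2)) {p ∈ cappedPairs j | 0 < p.1 ∧ 2 * p.1 ∉ p.2}
      (cappedPairs j) := by
  refine Set.InvOn.bijOn (f' := fun p ↦ (p.1 + 1, p.2)) ⟨?_, ?_⟩ ?_ ?_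
  · rintro ⟨l, ν⟩ ⟨-, hl, -⟩
    exact Prod.ext (Nat.sub_add_cancel hl) rfl
  · rintro ⟨l, ν⟩ -
    rfl
  · rintro ⟨l, ν⟩ ⟨hν, -, hmem⟩ x hx
    have := hν x hx
    have hne : x ≠ 2 * l := fun h ↦ hmem (h ▸ hx)
    grind
  · rintro ⟨l, ν⟩ hν
    refine ⟨fun x hx ↦ ⟨(hν x hx).1, fun h ↦ ((hν x hx).2.1 h).trans (by dsimp only; omega),
      (hν x hx).2.2⟩, Nat.succ_pos _, fun h ↦ ?_⟩
    have := (hν _ h).2.1 (even_two_mul _)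
    dsimp only at this
    omega

theorem bijOn_erase_two_mul_fst (j : ℕ) :
    Set.BijOn (fun p ↦ (p.1, p.2.erase (2 * p.1)))
      {p ∈ cappedPairs j | ¬(0 < p.1 ∧ 2 * p.1 ∉ p.2)} (cappedPairs j) := by
  refine Set.InvOn.bijOn (f' := fun p ↦ (p.1, if p.1 = 0 then p.2 else 2 * p.1 ::ₘ p.2))
    ⟨?_, ?_⟩ ?_ ?_
  · rintro ⟨l, ν⟩ ⟨hν, hl⟩
    obtain rfl | hl0 := l.eq_zero_or_pos
    · simp [Multiset.erase_of_notMem (zero_notMem_of_mem_cappedPairs hν)]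
    · have hmem : 2 * l ∈ ν := by_contra fun h ↦ hl ⟨hl0, h⟩
      simp [hl0.ne', Multiset.cons_erase hmem]
  · rintro ⟨l, ν⟩ hν
    obtain rfl | hl0 := l.eq_zero_or_pos
    · simp [Multiset.erase_of_notMem (zero_notMem_of_mem_cappedPairs hν)]
    · simp [hl0.ne']
  · rintro ⟨l, ν⟩ ⟨hν, -⟩
    exact fun x hx ↦ hν x (Multiset.mem_of_mem_erase hx)
  · rintro ⟨l, ν⟩ hν
    obtain rfl | hl0 := l.eq_zero_or_pos
    · simpa using hν
    · simp only [hl0.ne', if_false]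
      refine ⟨Multiset.forall_mem_cons.mpr ⟨⟨by omega, fun _ ↦ le_rfl, fun h ↦ ?_⟩, hν⟩,
        fun h ↦ h.2 (Multiset.mem_cons_self _ _)⟩
      exact absurd (even_two_mul l) (Nat.not_even_iff_odd.mpr h)

variable (R : Type*) [CommRing R]

/-- The generating function of `cappedPairs j` by `cappedSize k`. -/
noncomputable def cappedGenFun (j k : ℕ) : R⟦X⟧ :=
  weightedGenFun (cappedPairs j) (cappedSize k) fun _ ↦ 1

theorem coeff_cappedGenFun (j k n : ℕ) :
    coeff n (cappedGenFun R j k) = {p ∈ cappedPairs j | cappedSize k p = n}.ncard :=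
  coeff_weightedGenFun_one (finite_cappedPairs j k) n

theorem one_sub_mul_cappedGenFun_eq_succ_left (j k : ℕ) :
    (1 - X ^ (4 * j + 2)) * cappedGenFun R j k = cappedGenFun R (j + 1) k := by
  have hnot : {p ∈ cappedPairs j | 2 * j + 1 ∉ p.2} = cappedPairs (j + 1) :=
    Set.ext fun _ ↦ mem_cappedPairs_succ_iff.symm
  have hmem : weightedGenFun {p ∈ cappedPairs j | 2 * j + 1 ∈ p.2} (cappedSize k)
      (fun _ ↦ (1 : R)) = C 1 * X ^ (4 * j + 2) * cappedGenFun R j k := by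
    refine weightedGenFun_eq_of_bijOn (finite_cappedPairs j k) (bijOn_erase_odd j) ?_
      fun _ _ ↦ (one_mul 1).symm
    rintro ⟨l, ν⟩ ⟨-, hj⟩
    obtain ⟨ν, rfl⟩ := Multiset.exists_cons_of_mem hj
    simp only [cappedSize, Multiset.sum_cons, Multiset.erase_cons_head]
    ring
  have hsplit : cappedGenFun R j k =
      cappedGenFun R (j + 1) k + C 1 * X ^ (4 * j + 2) * cappedGenFun R j k := by
    rw [← hmem, cappedGenFun, cappedGenFun, ← hnot]
    exact weightedGenFun_sep_not_add_sep (finite_cappedPairs j k) _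
  rw [map_one] at hsplit
  linear_combination hsplit

theorem one_sub_mul_cappedGenFun_eq_succ_right (j k : ℕ) :
    (1 - X ^ (4 * k + 2)) * cappedGenFun R j k = cappedGenFun R j (k + 1) := by
  have hnot : weightedGenFun {p ∈ cappedPairs j | ¬(0 < p.1 ∧ 2 * p.1 ∉ p.2)} (cappedSize k)
      (fun _ ↦ (1 : R)) = C 1 * X ^ 0 * cappedGenFun R j (k + 1) := by
    refine weightedGenFun_eq_of_bijOn (finite_cappedPairs j (k + 1)) (bijOn_erase_two_mul_fst j) ?_
      fun _ _ ↦ (one_mul 1).symm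
    rintro ⟨l, ν⟩ ⟨hν, hl⟩
    obtain rfl | hl0 := l.eq_zero_or_pos
    · simp [cappedSize, Multiset.erase_of_notMem (zero_notMem_of_mem_cappedPairs hν)]
    · obtain ⟨ν, rfl⟩ := Multiset.exists_cons_of_mem (by_contra fun h ↦ hl ⟨hl0, h⟩ : 2 * l ∈ ν)
      simp only [cappedSize, Multiset.sum_cons, Multiset.erase_cons_head]
      ring
  have hmem : weightedGenFun {p ∈ cappedPairs j | 0 < p.1 ∧ 2 * p.1 ∉ p.2} (cappedSize k)
      (fun _ ↦ (1 : R)) = C 1 * X ^ (4 * k + 2) * cappedGenFun R j k := by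
    refine weightedGenFun_eq_of_bijOn (finite_cappedPairs j k) (bijOn_pred_fst j) ?_
      fun _ _ ↦ (one_mul 1).symm
    rintro ⟨l, ν⟩ ⟨-, hl, -⟩
    obtain ⟨l, rfl⟩ := Nat.exists_eq_add_one_of_ne_zero hl.ne'
    simp only [cappedSize, Nat.add_sub_cancel]
    ring
  have hsplit : cappedGenFun R j k =
      C 1 * X ^ 0 * cappedGenFun R j (k + 1) + C 1 * X ^ (4 * k + 2) * cappedGenFun R j k := by
    rw [← hnot, ← hmem]
    exact weightedGenFun_sep_not_add_sep (finite_cappedPairs j k) _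
  rw [map_one] at hsplit
  linear_combination hsplit

theorem le_cappedSize {k : ℕ} {p : ℕ × Multiset ℕ} (hp : p ∈ cappedPairs k) (h0 : p ≠ 0) :
    k ≤ cappedSize k p := by
  obtain ⟨l, ν⟩ := p
  simp only [cappedSize]
  obtain rfl | hl := l.eq_zero_or_pos
  · have hν : ν ≠ 0 := by rintro rfl; exact h0 rfl
    obtain ⟨x, hx⟩ := Multiset.exists_mem_of_ne_zero hν
    obtain ⟨hpos, heven, hodd⟩ := hp x hx
    have hlt : 2 * k < x := hodd (Nat.not_even_iff_odd.mp fun h ↦ hpos.not_ge (heven h))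
    have hle := Multiset.le_sum_of_mem hx
    omega
  · have := Nat.le_mul_of_pos_right (2 * k + 1) (Nat.mul_pos two_pos hl)
    omega

variable [TopologicalSpace R]

theorem tendsto_cappedGenFun_one :
    Tendsto (fun k ↦ cappedGenFun R k k) atTop (𝓝 1) :=
  tendsto_weightedGenFun_one 0 (fun _ ↦ by simp [cappedPairs]) (fun _ ↦ by simp [cappedSize]) rfl
    fun _ _ ↦ le_cappedSize

variable [IsTopologicalRing R] [T2Space R]

theorem qPochhammer_mul_cappedGenFun :
    qPochhammer (1 : R) 2 4 * qPochhammer 1 2 4 * cappedGenFun R 0 0 = 1 := by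
  have hmul := multipliable_one_sub_C_mul_X_pow (1 : R) 2 (m := 4) (by norm_num)
  have htelescope := tprod_mul_eq_tprod_mul_of_tendsto (hmul.mul hmul) multipliable_one
    (tendsto_cappedGenFun_one R) fun k ↦ by
      rw [← one_sub_mul_cappedGenFun_eq_succ_left, ← one_sub_mul_cappedGenFun_eq_succ_right,
        map_one, add_comm 2]
      ring
  rw [hmul.tprod_mul hmul, tprod_one, one_mul] at htelescope
  exact htelescope

end CappedPair

theorem copartitionGenFun_neg_one_one_eq_cappedGenFun (R : Type*) [CommRing R] :
    copartitionGenFun (-1 : R) 1 1 1 2 = cappedGenFun R 0 0 := by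
  let _ : TopologicalSpace R := ⊥
  have : DiscreteTopology R := ⟨rfl⟩
  have hneg : qPochhammer (-1 : R) 1 2 * qPochhammer 1 1 2 = qPochhammer 1 2 4 := by
    simpa using qPochhammer_neg_mul (1 : R) 1 two_pos
  have hunit : IsUnit (qPochhammer (1 : R) 2 4) := isUnit_qPochhammer 1 two_pos four_pos
  refine (hunit.mul hunit).mul_left_cancel ?_
  calc qPochhammer (1 : R) 2 4 * qPochhammer 1 2 4 * copartitionGenFun (-1 : R) 1 1 1 2
      = qPochhammer (-1 : R) 1 2 * qPochhammer 1 1 2 * copartitionGenFun (-1 : R) 1 1 1 2 *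
          qPochhammer 1 2 4 := by rw [hneg, mul_right_comm]
    _ = qPochhammer (-1 : R) 2 2 * qPochhammer 1 2 4 := by
        rw [qPochhammer_mul_copartitionGenFun (-1 : R) 1 one_pos one_pos two_pos, mul_one,
          one_add_one_eq_two]
    _ = 1 := qPochhammer_neg_one_mul_qPochhammer_one two_pos
    _ = qPochhammer 1 2 4 * qPochhammer 1 2 4 * cappedGenFun R 0 0 :=
        (qPochhammer_mul_cappedGenFun R).symm

theorem stmt11 (n : ℕ) :
    (cpEven 1 1 2 n : ℤ) - (cpOdd 1 1 2 n : ℤ) =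
      ({lam : Multiset ℕ | (∀ x ∈ lam, 0 < x) ∧ lam.sum = n ∧
        (∀ x ∈ lam, x ≠ largestEvenPart lam → Even (lam.count x)) ∧
        ((∃ x ∈ lam, Even x) → Odd (lam.count (largestEvenPart lam)))}).ncard := by
  rw [← coeff_copartitionGenFun_neg_one_one one_pos one_pos,
    copartitionGenFun_neg_one_one_eq_cappedGenFun, coeff_cappedGenFun,
    ← image_partitionOfCappedPair,
    ((injOn_partitionOfCappedPair 0).mono (Set.sep_subset _ _)).ncard_image]
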